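/- arXiv:2512.04558 — 6 statements merged into one kernel-verified Lean document; each statement's English description precedes it below -/
import Mathlib

section
/- For any two policies π₁, π₂ on a finite action set 𝒜 such that the support of π₁ is contained in the support of π₂ (so that the coverage C(π₁, π₂) is finite), and any 0 < ε < 1, the rejection threshold satisfies M^ε_{π₁,π₂} ≤ C(π₁, π₂)/ε; equivalently, E_{M}(π₁, π₂) ≤ ε for M = C(π₁, π₂)/ε. -/
open Finset

/-- The `E_M`-divergence between two policies on a finite action set. -/
noncomputable def EMdiv {A : Type*} [Fintype A] (p q : A → ℝ) (M : ℝ) : ℝ :=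
  ∑ a, max 0 (p a - M * q a)

/-- The rejection threshold `M^ε_{p,q}`: the smallest `M` with `E_M(p,q) ≤ ε`. -/
noncomputable def Meps {A : Type*} [Fintype A] (p q : A → ℝ) (ε : ℝ) : ℝ :=
  sInf {M : ℝ | EMdiv p q M ≤ ε}

/-- The coverage `C(p,q) = Σ_a p(a)² / q(a)`. -/
noncomputable def Cov {A : Type*} [Fintype A] (p q : A → ℝ) : ℝ :=
  ∑ a, p a ^ 2 / q a

/-!
By AM-GM, `4 * x * z ≤ x ^ 2 + 4 * z ^ 2`, so `x - z ≤ x ^ 2 / (4 * z)` for `z > 0`. Taking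
`x = p a`, `z = M * q a` and summing over `a` gives `EMdiv p q M ≤ Cov p q / (4 * M)`, which is at
most `ε` as soon as `M ≥ Cov p q / (4 * ε)`. The factor `4` is sharp: for `p = (1, 0)` and
`q = (t, 1 - t)` there is equality at `M = 1 / (2 * t)`.
-/

theorem sub_le_sq_div_four_mul {K : Type*} [Field K] [LinearOrder K] [IsStrictOrderedRing K]
    (x : K) {z : K} (hz : 0 < z) : x - z ≤ x ^ 2 / (4 * z) := by
  rw [le_div_iff₀ (by positivity)]
  linarith [sq_nonneg (x - 2 * z)]

section Divergence

variable {A : Type*} [Fintype A] {p q : A → ℝ} {M ε : ℝ}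

theorem cov_nonneg (hq : ∀ a, 0 ≤ q a) : 0 ≤ Cov p q :=
  sum_nonneg fun a _ => div_nonneg (sq_nonneg (p a)) (hq a)

theorem cov_eq_zero_iff (hq : ∀ a, 0 ≤ q a) (hsupp : ∀ a, q a = 0 → p a = 0) :
    Cov p q = 0 ↔ p = 0 := by
  have hterm (a : A) : p a ^ 2 / q a = 0 ↔ p a = 0 := by
    rw [div_eq_zero_iff, sq_eq_zero_iff, or_iff_left_of_imp (hsupp a)]
  rw [Cov, sum_eq_zero_iff_of_nonneg fun a _ => div_nonneg (sq_nonneg (p a)) (hq a)]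
  simp only [mem_univ, true_imp_iff, hterm, funext_iff, Pi.zero_apply]

theorem emdiv_le_cov_div_four_mul (hq : ∀ a, 0 ≤ q a) (hsupp : ∀ a, q a = 0 → p a = 0)
    (hM : 0 < M) : EMdiv p q M ≤ Cov p q / (4 * M) := by
  rw [EMdiv, Cov, sum_div]
  refine sum_le_sum fun a _ => ?_
  rcases (hq a).eq_or_lt with hqa | hqa
  · simp [← hqa, hsupp a hqa.symm]
  · have hle : p a - M * q a ≤ p a ^ 2 / q a / (4 * M) := by
      calc p a - M * q a ≤ p a ^ 2 / (4 * (M * q a)) := sub_le_sq_div_four_mul _ (mul_pos hM hqa)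
        _ = p a ^ 2 / q a / (4 * M) := by rw [div_div]; ring
    exact max_le (by positivity) hle

theorem emdiv_le_of_cov_div_le (hq : ∀ a, 0 ≤ q a) (hsupp : ∀ a, q a = 0 → p a = 0)
    (hε : 0 < ε) (hM : Cov p q / (4 * ε) ≤ M) : EMdiv p q M ≤ ε := by
  have hM0 : 0 ≤ M := (div_nonneg (cov_nonneg hq) (by positivity)).trans hM
  have hCov : Cov p q ≤ M * (4 * ε) := (div_le_iff₀ (by positivity)).mp hM
  rcases hM0.eq_or_lt with rfl | hMpos
  · have hp : p = 0 :=
      (cov_eq_zero_iff hq hsupp).mp (le_antisymm (by simpa using hCov) (cov_nonneg hq))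
    simpa [EMdiv, hp] using hε.le
  · calc EMdiv p q M ≤ Cov p q / (4 * M) := emdiv_le_cov_div_four_mul hq hsupp hMpos
      _ ≤ ε := by
        rw [div_le_iff₀ (by positivity)]
        linarith

theorem sum_sub_mul_sum_le_emdiv (p q : A → ℝ) (M : ℝ) :
    ∑ a, p a - M * ∑ a, q a ≤ EMdiv p q M := by
  rw [mul_sum, ← sum_sub_distrib]
  exact sum_le_sum fun a _ => le_max_right _ _

theorem bddBelow_setOf_emdiv_le (hq : 0 < ∑ a, q a) : BddBelow {M | EMdiv p q M ≤ ε} := by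
  refine ⟨(∑ a, p a - ε) / ∑ a, q a, fun M hM => ?_⟩
  rw [div_le_iff₀ hq]
  linarith [(sum_sub_mul_sum_le_emdiv p q M).trans hM]

theorem meps_le_of_emdiv_le (hq : 0 < ∑ a, q a) (hM : EMdiv p q M ≤ ε) : Meps p q ε ≤ M :=
  csInf_le (bddBelow_setOf_emdiv_le hq) hM

theorem stmt0_general (hq0 : ∀ a, 0 ≤ q a) (hq : 0 < ∑ a, q a)
    (hsupp : ∀ a, q a = 0 → p a = 0) (hε : 0 < ε) (hM : Cov p q / (4 * ε) ≤ M) :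
    EMdiv p q M ≤ ε ∧ Meps p q ε ≤ M :=
  have hE : EMdiv p q M ≤ ε := emdiv_le_of_cov_div_le hq0 hsupp hε hM
  ⟨hE, meps_le_of_emdiv_le hq hE⟩

end Divergence

/-- for policies `p, q` with `supp p ⊆ supp q` and `0 < ε < 1`,
`E_M(p,q) ≤ ε` for `M = C(p,q)/ε`; equivalently `M^ε_{p,q} ≤ C(p,q)/ε`. -/
theorem stmt0 {A : Type*} [Fintype A] (p q : A → ℝ)
    (hp0 : ∀ a, 0 ≤ p a) (hp1 : ∑ a, p a = 1)
    (hq0 : ∀ a, 0 ≤ q a) (hq1 : ∑ a, q a = 1)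
    (hsupp : ∀ a, q a = 0 → p a = 0)
    (ε : ℝ) (hε0 : 0 < ε) (hε1 : ε < 1) :
    EMdiv p q (Cov p q / ε) ≤ ε ∧ Meps p q ε ≤ Cov p q / ε :=
  stmt0_general hq0 (hq1 ▸ one_pos) hsupp hε0 <|
    div_le_div_of_nonneg_left (cov_nonneg hq0) hε0 (by linarith)
end

section
/- Let p, q, and μ be probability mass functions on a finite action set 𝒜 and let n ≥ 1 be a real number. If μ(a) ≤ n·q(a) for every a ∈ 𝒜 with p(a) > n·q(a), then Σ_{a∈𝒜} |p(a) − μ(a)| ≥ E_n(p, q). In particular, if an algorithm's output distribution μ satisfies μ(a) ≤ Σ_{i=1}^n p_i(a) for sampling distributions p_i with p_i(a) ≤ q(a) on the overshoot set {a : p(a) > n·q(a)}, then the L1 distance between p and μ is at least E_n(p, q). -/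
open Finset

/-- A policy on a finite action set is a probability mass function. -/
def IsPolicy {A : Type*} [Fintype A] (p : A → ℝ) : Prop :=
  (∀ a, 0 ≤ p a) ∧ ∑ a, p a = 1

theorem max_zero_sub_le_abs_sub {G : Type*} [AddCommGroup G] [LinearOrder G]
    [IsOrderedAddMonoid G] {x y c : G} (h : c < x → y ≤ c) :
    max 0 (x - c) ≤ |x - y| := by
  refine max_le (abs_nonneg _) ?_
  rcases le_or_gt x c with hxc | hcx
  · exact (sub_nonpos.mpr hxc).trans (abs_nonneg _)
  · exact (sub_le_sub_left (h hcx) x).trans (le_abs_self _)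

section EMdiv

variable {A : Type*} [Fintype A] {p q μ : A → ℝ}

theorem EMdiv_le_sum_abs_sub {M : ℝ} (h : ∀ a, M * q a < p a → μ a ≤ M * q a) :
    EMdiv p q M ≤ ∑ a, |p a - μ a| :=
  sum_le_sum fun a _ => max_zero_sub_le_abs_sub (h a)

theorem EMdiv_card_le_sum_abs_sub {ι : Type*} [Fintype ι] {ps : ι → A → ℝ}
    (hps : ∀ a, Fintype.card ι * q a < p a → ∀ i, ps i a ≤ q a)
    (hμ : ∀ a, Fintype.card ι * q a < p a → μ a ≤ ∑ i, ps i a) :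
    EMdiv p q (Fintype.card ι) ≤ ∑ a, |p a - μ a| := by
  refine EMdiv_le_sum_abs_sub fun a ha => ?_
  calc μ a ≤ ∑ i, ps i a := hμ a ha
    _ ≤ ∑ _i : ι, q a := sum_le_sum fun i _ => hps a ha i
    _ = Fintype.card ι * q a := by rw [sum_const, card_univ, nsmul_eq_mul]

end EMdiv

theorem stmt4_general {A : Type*} [Fintype A] (p q μ : A → ℝ) :
    (∀ M : ℝ, (∀ a, M * q a < p a → μ a ≤ M * q a) →
      EMdiv p q M ≤ ∑ a, |p a - μ a|)
    ∧ (∀ (ι : Type*) [Fintype ι] (ps : ι → A → ℝ),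
        (∀ a, Fintype.card ι * q a < p a → ∀ i, ps i a ≤ q a) →
        (∀ a, Fintype.card ι * q a < p a → μ a ≤ ∑ i, ps i a) →
        EMdiv p q (Fintype.card ι) ≤ ∑ a, |p a - μ a|) :=
  ⟨fun _ => EMdiv_le_sum_abs_sub, fun _ _ _ => EMdiv_card_le_sum_abs_sub⟩

/-- if `μ(a) ≤ n·q(a)` on the overshoot set `{a : p(a) > n·q(a)}`, then
`Σ_a |p(a) − μ(a)| ≥ E_n(p,q)`.  In particular, if `μ(a) ≤ Σ_{i=1}^n p_i(a)` for
sampling distributions `p_i` satisfying `p_i(a) ≤ q(a)` on the overshoot set, then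
the L1 distance between `p` and `μ` is at least `E_n(p,q)`. -/
theorem stmt4 {A : Type*} [Fintype A]
    (p q μ : A → ℝ) (hp : IsPolicy p) (hq : IsPolicy q) (hμ : IsPolicy μ) :
    (∀ n : ℝ, 1 ≤ n →
      (∀ a, n * q a < p a → μ a ≤ n * q a) →
      EMdiv p q n ≤ ∑ a, |p a - μ a|)
    ∧ (∀ n : ℕ, 1 ≤ n → ∀ ps : Fin n → A → ℝ,
        (∀ i, IsPolicy (ps i)) →
        (∀ a, (n : ℝ) * q a < p a → ∀ i, ps i a ≤ q a) →
        (∀ a, μ a ≤ ∑ i, ps i a) →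
        EMdiv p q n ≤ ∑ a, |p a - μ a|) := by
  obtain ⟨le_of_bound, le_of_sum_bound⟩ := stmt4_general p q μ
  exact ⟨fun n _ => le_of_bound n, fun n _ ps _ hps hle =>
    (Fintype.card_fin n ▸ le_of_sum_bound (Fin n) ps) hps fun a _ => hle a⟩
end

section
/- Let 𝒜 be a finite action set, a* ∈ 𝒜, and let the comparator policy π* be the point mass at a*. Assume the mixture-of-reference-policies model, let τ* ∈ 𝒯 maximize π^τ(a*) over τ ∈ 𝒯, and let π_LLM(· | x) = Σ_τ p_ref(τ)·π^τ(·) be the prior-mixture policy. Then for every 0 < ε < 1, M^ε_{π*, π^{τ*}} ≤ M^ε_{π*, π_LLM(·|x)}, and the inequality is strict whenever there exists τ ∈ 𝒯 with p_ref(τ) > 0 and π^τ(a*) < π^{τ*}(a*). -/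
/-!
Against the point mass at `a*`, the `E_M`-divergence of a policy `q` is `max 0 (1 - M * q a*)` for
`M ≥ 0`, so `M^ε = (1 - ε) / q a*`: the threshold depends on `q` only through `q a*` and decreases
in it. The mixture gives `a*` a weighted mean of the masses `π^τ a*`, which is at most their
maximum, and strictly less as soon as a non-maximal `τ` carries weight.
-/

open Finset

/-- The point mass at `astar`. -/
def pointMass {A : Type*} [DecidableEq A] (astar : A) : A → ℝ :=
  fun a => if a = astar then 1 else 0

theorem sum_mul_lt_of_sum_eq_one {ι R : Type*} [Semiring R] [PartialOrder R] [IsStrictOrderedRing R]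
    {s : Finset ι} {w f : ι → R} {c : R} (hw0 : ∀ i ∈ s, 0 ≤ w i) (hw1 : ∑ i ∈ s, w i = 1)
    (hf : ∀ i ∈ s, f i ≤ c) (hlt : ∃ i ∈ s, 0 < w i ∧ f i < c) :
    ∑ i ∈ s, w i * f i < c := by
  obtain ⟨j, hj, hwj, hfj⟩ := hlt
  calc
    ∑ i ∈ s, w i * f i < ∑ i ∈ s, w i * c :=
      sum_lt_sum (fun i hi => mul_le_mul_of_nonneg_left (hf i hi) (hw0 i hi))
        ⟨j, hj, mul_lt_mul_of_pos_left hfj hwj⟩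
    _ = c := by rw [← sum_mul, hw1, one_mul]

section PointMass

variable {A : Type*} [Fintype A] [DecidableEq A] {q r : A → ℝ} {ε : ℝ}

theorem EMdiv_pointMass_of_nonneg (hq : ∀ a, 0 ≤ q a) (a : A) {M : ℝ} (hM : 0 ≤ M) :
    EMdiv (pointMass a) q M = max 0 (1 - M * q a) := by
  rw [EMdiv, Fintype.sum_eq_single a]
  · simp only [pointMass, if_true]
  · intro b hb
    simp only [pointMass, if_neg hb, zero_sub]
    exact max_eq_left (neg_nonpos.mpr (mul_nonneg hM (hq b)))

theorem one_sub_mul_le_EMdiv_pointMass (q : A → ℝ) (a : A) (M : ℝ) :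
    1 - M * q a ≤ EMdiv (pointMass a) q M :=
  calc
    1 - M * q a ≤ max 0 (pointMass a a - M * q a) := by simp [pointMass]
    _ ≤ EMdiv (pointMass a) q M :=
      single_le_sum (f := fun b => max 0 (pointMass a b - M * q b))
        (fun _ _ => le_max_left _ _) (mem_univ a)

theorem EMdiv_pointMass_le_iff (hq : ∀ a, 0 ≤ q a) (a : A) (hε0 : 0 ≤ ε) (hε1 : ε < 1) (M : ℝ) :
    EMdiv (pointMass a) q M ≤ ε ↔ 1 - ε ≤ M * q a := by
  constructor
  · intro h
    linarith [one_sub_mul_le_EMdiv_pointMass q a M]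
  · intro h
    have hMq : 0 < M * q a := (sub_pos.mpr hε1).trans_le h
    have hM : 0 < M := pos_of_mul_pos_left hMq (hq a)
    rw [EMdiv_pointMass_of_nonneg hq a hM.le]
    exact max_le hε0 (by linarith)

theorem Meps_pointMass (hq : ∀ a, 0 ≤ q a) (a : A) (hε0 : 0 ≤ ε) (hε1 : ε < 1) :
    Meps (pointMass a) q ε = (1 - ε) / q a := by
  simp only [Meps, EMdiv_pointMass_le_iff hq a hε0 hε1]
  rcases (hq a).eq_or_lt with hqa | hqa
  · -- No `M` is admissible here, and both sides take the junk value `sInf ∅ = 0 = (1 - ε) / 0`.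
    simp [← hqa, hε1.not_ge]
  · simp only [← div_le_iff₀ hqa]
    exact csInf_Ici

theorem Meps_pointMass_le_Meps_pointMass (hq : ∀ a, 0 ≤ q a) (hr : ∀ a, 0 ≤ r a) {a : A}
    (hpos : 0 < r a → 0 < q a) (hle : q a ≤ r a) (hε0 : 0 ≤ ε) (hε1 : ε < 1) :
    Meps (pointMass a) r ε ≤ Meps (pointMass a) q ε := by
  have hε : 0 ≤ 1 - ε := sub_nonneg.mpr hε1.le
  rw [Meps_pointMass hq a hε0 hε1, Meps_pointMass hr a hε0 hε1]
  rcases (hr a).eq_or_lt with hra | hra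
  · rw [← hra, div_zero]
    exact div_nonneg hε (hq a)
  · exact div_le_div_of_nonneg_left hε (hpos hra) hle

theorem Meps_pointMass_lt_Meps_pointMass (hq : ∀ a, 0 ≤ q a) (hr : ∀ a, 0 ≤ r a) {a : A}
    (hpos : 0 < q a) (hlt : q a < r a) (hε0 : 0 ≤ ε) (hε1 : ε < 1) :
    Meps (pointMass a) r ε < Meps (pointMass a) q ε := by
  rw [Meps_pointMass hq a hε0 hε1, Meps_pointMass hr a hε0 hε1]
  exact div_lt_div_of_pos_left (sub_pos.mpr hε1) hpos hlt

end PointMass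

theorem stmt6_general {A : Type*} [Fintype A] [DecidableEq A] {T : Type*} [Fintype T]
    (pref : T → ℝ) (hpref0 : ∀ τ, 0 ≤ pref τ) (hpref1 : ∑ τ, pref τ = 1)
    (pit : T → A → ℝ) (hpit : ∀ τ a, 0 ≤ pit τ a)
    (astar : A) (τs : T) (hprefs : 0 < pref τs) (hτs : ∀ τ, pit τ astar ≤ pit τs astar)
    (ε : ℝ) (hε0 : 0 ≤ ε) (hε1 : ε < 1) :
    Meps (pointMass astar) (pit τs) ε
        ≤ Meps (pointMass astar) (fun a => ∑ τ, pref τ * pit τ a) ε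
    ∧ ((∃ τ, 0 < pref τ ∧ pit τ astar < pit τs astar) →
        Meps (pointMass astar) (pit τs) ε
          < Meps (pointMass astar) (fun a => ∑ τ, pref τ * pit τ a) ε) := by
  have hterm (a : A) (τ : T) : 0 ≤ pref τ * pit τ a := mul_nonneg (hpref0 τ) (hpit τ a)
  have hmix (a : A) : 0 ≤ ∑ τ, pref τ * pit τ a := sum_nonneg fun τ _ => hterm a τ
  have hpos (h : 0 < pit τs astar) : 0 < ∑ τ, pref τ * pit τ astar :=
    sum_pos' (fun τ _ => hterm astar τ) ⟨τs, mem_univ τs, mul_pos hprefs h⟩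
  constructor
  · have hle : ∑ τ, pref τ * pit τ astar ≤ pit τs astar :=
      (convex_Iic (pit τs astar)).sum_mem (fun τ _ => hpref0 τ) hpref1 fun τ _ => hτs τ
    exact Meps_pointMass_le_Meps_pointMass hmix (hpit τs) hpos hle hε0 hε1
  · rintro ⟨τ, hprefτ, hτ⟩
    have hlt : ∑ τ, pref τ * pit τ astar < pit τs astar :=
      sum_mul_lt_of_sum_eq_one (fun τ _ => hpref0 τ) hpref1 (fun τ _ => hτs τ)
        ⟨τ, mem_univ τ, hprefτ, hτ⟩
    exact Meps_pointMass_lt_Meps_pointMass hmix (hpit τs) (hpos ((hpit τ astar).trans_lt hτ)) hlt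
      hε0 hε1

/-- with `π* = δ_{a*}`, `τ*` maximizing `π^τ(a*)`, and
`π_LLM(·|x) = Σ_τ p_ref(τ)·π^τ(·)` the prior mixture, for every `0 < ε < 1` one has
`M^ε_{π*, π^{τ*}} ≤ M^ε_{π*, π_LLM(·|x)}`, strictly whenever some `τ` has
`p_ref(τ) > 0` and `π^τ(a*) < π^{τ*}(a*)`. -/
theorem stmt6 {A : Type*} [Fintype A] [DecidableEq A] {T : Type*} [Fintype T]
    (pref : T → ℝ) (hpref0 : ∀ τ, 0 < pref τ) (hpref1 : ∑ τ, pref τ = 1)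
    (pit : T → A → ℝ) (hpit : ∀ τ, IsPolicy (pit τ))
    (astar : A) (τs : T) (hτs : ∀ τ, pit τ astar ≤ pit τs astar)
    (ε : ℝ) (hε0 : 0 < ε) (hε1 : ε < 1) :
    Meps (pointMass astar) (pit τs) ε
        ≤ Meps (pointMass astar) (fun a => ∑ τ, pref τ * pit τ a) ε
    ∧ ((∃ τ, 0 < pref τ ∧ pit τ astar < pit τs astar) →
        Meps (pointMass astar) (pit τs) ε
          < Meps (pointMass astar) (fun a => ∑ τ, pref τ * pit τ a) ε) :=
  stmt6_general pref (fun τ => (hpref0 τ).le) hpref1 pit (fun τ => (hpit τ).1) astar τs (hpref0 τs)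
    hτs ε hε0.le hε1
end

section
/- Let p and q be probability mass functions on a finite action set 𝒜 and M > 0. Define the truncated pseudo-distribution π_M(a) := min{p(a), M·q(a)} and its total mass A := Σ_{a∈𝒜} π_M(a). Then A = 1 − E_M(p, q), and if A > 0, the normalized truncation satisfies Σ_{a∈𝒜} |p(a) − π_M(a)/A| ≤ 2·E_M(p, q). -/
open Finset

/-!
Truncating `p` from above by a nonnegative `g` removes exactly the mass `E = ∑ max 0 (p - g)`, so
the truncation `r` is at `ℓ¹`-distance `E` from `p` and has mass `1 - E`. Rescaling a nonnegative
`r` of mass `S` to mass `1` moves it by `|1 - S|` in `ℓ¹`, here again `E`; the bound is the triangle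
inequality through `r`.
-/

section OrderedGroup

variable {G : Type*} [AddCommGroup G] [LinearOrder G] [IsOrderedAddMonoid G]

theorem sub_min_eq_max_zero_sub (a b : G) : a - min a b = max 0 (a - b) := by
  rw [← max_sub_sub_left, sub_self]

theorem sum_min_eq_sum_sub_sum_max {ι : Type*} (s : Finset ι) (f g : ι → G) :
    ∑ i ∈ s, min (f i) (g i) = ∑ i ∈ s, f i - ∑ i ∈ s, max 0 (f i - g i) := by
  simp only [← sub_min_eq_max_zero_sub, sum_sub_distrib, sub_sub_cancel]

theorem sum_abs_sub_min {ι : Type*} (s : Finset ι) (f g : ι → G) :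
    ∑ i ∈ s, |f i - min (f i) (g i)| = ∑ i ∈ s, max 0 (f i - g i) :=
  sum_congr rfl fun i _ => by
    rw [sub_min_eq_max_zero_sub, abs_of_nonneg (le_max_left _ _)]

end OrderedGroup

section OrderedField

variable {ι K : Type*} [Field K] [LinearOrder K] [IsStrictOrderedRing K] {s : Finset ι}

theorem sum_abs_self_sub_div_sum {r : ι → K} (hr : ∀ i ∈ s, 0 ≤ r i) (hS : 0 < ∑ i ∈ s, r i) :
    ∑ i ∈ s, |r i - r i / ∑ j ∈ s, r j| = |1 - ∑ i ∈ s, r i| := by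
  set S := ∑ j ∈ s, r j with hS_def
  calc ∑ i ∈ s, |r i - r i / S|
      = ∑ i ∈ s, r i * |1 - S⁻¹| := sum_congr rfl fun i hi => by
        rw [div_eq_mul_inv, ← mul_one_sub, abs_mul, abs_of_nonneg (hr i hi)]
    _ = |S * (1 - S⁻¹)| := by rw [← sum_mul, ← hS_def, abs_mul, abs_of_pos hS]
    _ = |1 - S| := by rw [mul_one_sub, mul_inv_cancel₀ hS.ne', abs_sub_comm]

theorem sum_abs_sub_div_sum_le (p : ι → K) {r : ι → K} (hr : ∀ i ∈ s, 0 ≤ r i)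
    (hS : 0 < ∑ i ∈ s, r i) :
    ∑ i ∈ s, |p i - r i / ∑ j ∈ s, r j| ≤ ∑ i ∈ s, |p i - r i| + |1 - ∑ i ∈ s, r i| := by
  rw [← sum_abs_self_sub_div_sum hr hS, ← sum_add_distrib]
  exact sum_le_sum fun i _ => abs_sub_le _ _ _

theorem stmt9_general {p g : ι → K} (hp : ∀ i ∈ s, 0 ≤ p i) (hp_sum : ∑ i ∈ s, p i = 1)
    (hg : ∀ i ∈ s, 0 ≤ g i) :
    ∑ i ∈ s, min (p i) (g i) = 1 - ∑ i ∈ s, max 0 (p i - g i)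
    ∧ (0 < ∑ i ∈ s, min (p i) (g i) →
        ∑ i ∈ s, |p i - min (p i) (g i) / (∑ j ∈ s, min (p j) (g j))|
          ≤ 2 * ∑ i ∈ s, max 0 (p i - g i)) := by
  have mass_eq : ∑ i ∈ s, min (p i) (g i) = 1 - ∑ i ∈ s, max 0 (p i - g i) := by
    rw [sum_min_eq_sum_sub_sum_max, hp_sum]
  refine ⟨mass_eq, fun hS => ?_⟩
  have lost_nonneg : 0 ≤ ∑ i ∈ s, max 0 (p i - g i) := sum_nonneg fun _ _ => le_max_left _ _
  calc ∑ i ∈ s, |p i - min (p i) (g i) / ∑ j ∈ s, min (p j) (g j)|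
      ≤ ∑ i ∈ s, |p i - min (p i) (g i)| + |1 - ∑ i ∈ s, min (p i) (g i)| :=
        sum_abs_sub_div_sum_le p (fun i hi => le_min (hp i hi) (hg i hi)) hS
    _ = 2 * ∑ i ∈ s, max 0 (p i - g i) := by
        rw [sum_abs_sub_min, mass_eq, sub_sub_cancel, abs_of_nonneg lost_nonneg, two_mul]

end OrderedField

/-- with the truncated pseudo-distribution `π_M(a) = min{p(a), M·q(a)}`
of total mass `A₀ = Σ_a π_M(a)`, one has `A₀ = 1 − E_M(p,q)`, and if `A₀ > 0` then
`Σ_a |p(a) − π_M(a)/A₀| ≤ 2·E_M(p,q)`. -/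
theorem stmt9 {A : Type*} [Fintype A]
    (p q : A → ℝ) (hp : IsPolicy p) (hq : IsPolicy q)
    (M : ℝ) (hM : 0 < M) :
    (∑ a, min (p a) (M * q a)) = 1 - EMdiv p q M
    ∧ (0 < ∑ a, min (p a) (M * q a) →
        ∑ a, |p a - min (p a) (M * q a) / (∑ b, min (p b) (M * q b))|
          ≤ 2 * EMdiv p q M) :=
  stmt9_general (fun a _ => hp.1 a) hp.2 fun a _ => mul_nonneg hM.le (hq.1 a)
end

section
/- Posterior ratio bound for mixtures. Assume the mixture-of-reference-policies model, and fix τ* ∈ 𝒯 with p_ref(τ*) > 0 and Δ > 0. Let h = (a₁, …, a_k) ∈ 𝒜^k be a history whose every action satisfies the margin condition π^τ(a_j) ≤ e^{−Δ}·π^{τ*}(a_j) for all τ ≠ τ* (with π^{τ*}(a_j) > 0). Then for every a ∈ 𝒜 with π^{τ*}(a) > 0, π_LLM(a | h) / π^{τ*}(a) ≥ 1 / (1 + e^{−kΔ}/p_ref(τ*)). -/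
open Finset

/-- Posterior weight of the reference index `τ` given a history `h`. -/
noncomputable def postW {T A : Type*} [Fintype T] (pref : T → ℝ) (pit : T → A → ℝ)
    (h : List A) (τ : T) : ℝ :=
  pref τ * (h.map (pit τ)).prod / ∑ τ', pref τ' * (h.map (pit τ')).prod

/-- The posterior-predictive policy `π_LLM(· | h)` of the mixture-of-reference-policies model. -/
noncomputable def piLLM {T A : Type*} [Fintype T] (pref : T → ℝ) (pit : T → A → ℝ)
    (h : List A) (a : A) : ℝ :=
  ∑ τ, pit τ a * postW pref pit h τ

/-!
By Bayes' rule the posterior odds against `τs` are the prior odds against it times likelihood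
ratios. The margin condition multiplies over the history, so each of these ratios is at most
`c ^ k` with `c = exp (-Δ)`, and the prior odds are at most `1 / pref τs`. This bounds the posterior
weight of `τs` from below, and the mixture contains `π^{τs}` with that weight.
-/

section WeightedSums

variable {ι K : Type*}

theorem prod_map_le_pow_length_mul_prod_map [CommSemiring K] [PartialOrder K] [IsOrderedRing K]
    {l : List ι} {f g : ι → K} {c : K} (hf : ∀ i ∈ l, 0 ≤ f i) (hfg : ∀ i ∈ l, f i ≤ c * g i) :
    (l.map f).prod ≤ c ^ l.length * (l.map g).prod :=
  calc (l.map f).prod ≤ (l.map fun i => c * g i).prod := List.prod_map_le_prod_map₀ _ _ hf hfg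
    _ = c ^ l.length * (l.map g).prod := by
      rw [List.prod_map_mul, List.map_const', List.prod_replicate]

theorem sum_mul_le_add_mul_sum_erase_mul [CommRing K] [PartialOrder K] [IsOrderedRing K]
    [DecidableEq ι] {s : Finset ι} {w L : ι → K} {i : ι} {c : K} (hi : i ∈ s)
    (hw : ∀ j ∈ s, j ≠ i → 0 ≤ w j) (hL : ∀ j ∈ s, j ≠ i → L j ≤ c * L i) :
    ∑ j ∈ s, w j * L j ≤ (w i + c * ∑ j ∈ s.erase i, w j) * L i := by
  have hrest : ∑ j ∈ s.erase i, w j * L j ≤ ∑ j ∈ s.erase i, w j * (c * L i) :=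
    sum_le_sum fun j hj =>
      mul_le_mul_of_nonneg_left (hL j (mem_of_mem_erase hj) (ne_of_mem_erase hj))
        (hw j (mem_of_mem_erase hj) (ne_of_mem_erase hj))
  calc ∑ j ∈ s, w j * L j = w i * L i + ∑ j ∈ s.erase i, w j * L j :=
        (add_sum_erase s (fun j => w j * L j) hi).symm
    _ ≤ w i * L i + ∑ j ∈ s.erase i, w j * (c * L i) := by gcongr
    _ = (w i + c * ∑ j ∈ s.erase i, w j) * L i := by rw [← sum_mul]; ring

theorem one_div_one_add_le_mul_div_sum_mul [Field K] [LinearOrder K] [IsStrictOrderedRing K]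
    [DecidableEq ι] {s : Finset ι} {w L : ι → K} {i : ι} {c : K} (hi : i ∈ s)
    (hw : ∀ j ∈ s, 0 ≤ w j) (hL : ∀ j ∈ s, 0 ≤ L j) (hwi : 0 < w i) (hLi : 0 < L i)
    (hLc : ∀ j ∈ s, j ≠ i → L j ≤ c * L i) :
    1 / (1 + c * (∑ j ∈ s.erase i, w j) / w i) ≤ w i * L i / ∑ j ∈ s, w j * L j := by
  have hnum : 0 < w i * L i := mul_pos hwi hLi
  have hsum : 0 < ∑ j ∈ s, w j * L j :=
    sum_pos' (fun j hj => mul_nonneg (hw j hj) (hL j hj)) ⟨i, hi, hnum⟩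
  calc 1 / (1 + c * (∑ j ∈ s.erase i, w j) / w i)
      = w i * L i / ((w i + c * ∑ j ∈ s.erase i, w j) * L i) := by field_simp
    _ ≤ w i * L i / ∑ j ∈ s, w j * L j :=
      div_le_div_of_nonneg_left hnum.le hsum
        (sum_mul_le_add_mul_sum_erase_mul hi (fun j hj _ => hw j hj) hLc)

end WeightedSums

section Posterior

variable {A T : Type*} [Fintype T] {pref : T → ℝ} {pit : T → A → ℝ} {h : List A} {τs : T} {c : ℝ}

theorem postW_nonneg (hpref : ∀ τ, 0 ≤ pref τ) (hpit : ∀ τ, ∀ b ∈ h, 0 ≤ pit τ b) (τ : T) :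
    0 ≤ postW pref pit h τ :=
  have hjoint (σ : T) : 0 ≤ pref σ * (h.map (pit σ)).prod :=
    mul_nonneg (hpref σ) (List.prod_nonneg (List.forall_mem_map.2 (hpit σ)))
  div_nonneg (hjoint τ) (sum_nonneg fun σ _ => hjoint σ)

theorem mul_postW_le_piLLM (hpref : ∀ τ, 0 ≤ pref τ) (hpit : ∀ τ a, 0 ≤ pit τ a) (τ : T) (a : A) :
    pit τ a * postW pref pit h τ ≤ piLLM pref pit h a :=
  single_le_sum (f := fun σ => pit σ a * postW pref pit h σ)
    (fun σ _ => mul_nonneg (hpit σ a) (postW_nonneg hpref (fun σ b _ => hpit σ b) σ)) (mem_univ τ)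

theorem one_div_one_add_le_postW [DecidableEq T] (hpref : ∀ τ, 0 ≤ pref τ) (hτs : 0 < pref τs)
    (hpit : ∀ τ, ∀ b ∈ h, 0 ≤ pit τ b)
    (hmargin : ∀ b ∈ h, 0 < pit τs b ∧ ∀ τ, τ ≠ τs → pit τ b ≤ c * pit τs b) :
    1 / (1 + c ^ h.length * (∑ τ ∈ univ.erase τs, pref τ) / pref τs) ≤ postW pref pit h τs :=
  one_div_one_add_le_mul_div_sum_mul (L := fun τ => (h.map (pit τ)).prod) (mem_univ τs)
    (fun τ _ => hpref τ) (fun τ _ => List.prod_nonneg (List.forall_mem_map.2 (hpit τ))) hτs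
    (List.prod_pos (List.forall_mem_map.2 fun b hb => (hmargin b hb).1))
    fun τ _ hτ => prod_map_le_pow_length_mul_prod_map (hpit τ) fun b hb => (hmargin b hb).2 τ hτ

theorem stmt11_general (hpref0 : ∀ τ, 0 ≤ pref τ) (hpref1 : ∑ τ, pref τ = 1) (hτs : 0 < pref τs)
    (hpit : ∀ τ a, 0 ≤ pit τ a) (hc : 0 ≤ c)
    (hmargin : ∀ b ∈ h, 0 < pit τs b ∧ ∀ τ, τ ≠ τs → pit τ b ≤ c * pit τs b)
    {a : A} (ha : 0 < pit τs a) :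
    1 / (1 + c ^ h.length / pref τs) ≤ piLLM pref pit h a / pit τs a := by
  classical
  have hrest_nonneg : 0 ≤ ∑ τ ∈ univ.erase τs, pref τ := sum_nonneg fun τ _ => hpref0 τ
  have hrest_le_one : ∑ τ ∈ univ.erase τs, pref τ ≤ 1 :=
    hpref1 ▸ sum_le_univ_sum_of_nonneg hpref0
  calc 1 / (1 + c ^ h.length / pref τs)
      ≤ 1 / (1 + c ^ h.length * (∑ τ ∈ univ.erase τs, pref τ) / pref τs) := by
        gcongr
        exact mul_le_of_le_one_right (pow_nonneg hc _) hrest_le_one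
    _ ≤ postW pref pit h τs :=
        one_div_one_add_le_postW hpref0 hτs (fun τ b _ => hpit τ b) hmargin
    _ ≤ piLLM pref pit h a / pit τs a :=
        (le_div_iff₀' ha).2 (mul_postW_le_piLLM hpref0 hpit τs a)

end Posterior

/-- posterior ratio bound for mixtures.  If every action in the history
`h` (of length `k`) satisfies the margin condition `π^τ(a_j) ≤ e^{−Δ}·π^{τ*}(a_j)` for
all `τ ≠ τ*` (with `π^{τ*}(a_j) > 0`), then for every `a` with `π^{τ*}(a) > 0`,
`π_LLM(a|h)/π^{τ*}(a) ≥ 1/(1 + e^{−kΔ}/p_ref(τ*))`. -/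
theorem stmt11 {A : Type*} [Fintype A] {T : Type*} [Fintype T]
    (pref : T → ℝ) (hpref0 : ∀ τ, 0 < pref τ) (hpref1 : ∑ τ, pref τ = 1)
    (pit : T → A → ℝ) (hpit : ∀ τ, IsPolicy (pit τ))
    (τs : T) (Δ : ℝ) (hΔ : 0 < Δ)
    (h : List A)
    (hmargin : ∀ a ∈ h, 0 < pit τs a ∧
      ∀ τ, τ ≠ τs → pit τ a ≤ Real.exp (-Δ) * pit τs a) :
    ∀ a, 0 < pit τs a →
      1 / (1 + Real.exp (-(h.length : ℝ) * Δ) / pref τs)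
        ≤ piLLM pref pit h a / pit τs a := by
  intro _ ha
  simpa only [← Real.exp_nat_mul, mul_neg, neg_mul] using
    stmt11_general (fun τ => (hpref0 τ).le) hpref1 (hpref0 τs) (fun τ => (hpit τ).1)
      (Real.exp_pos (-Δ)).le hmargin ha
end

section
/- In-context convergence to the best reference policy. Assume the mixture-of-reference-policies model, fix a* ∈ 𝒜, and suppose τ* ∈ 𝒯 is the unique maximizer of π^τ(a*) over τ ∈ 𝒯, with π^{τ*}(a*) > 0 and p_ref(τ*) > 0. For each k ≥ 0, let h_k be the history consisting of a* repeated k times, so that π_LLM(a | h_k) = Σ_τ π^τ(a) · p_ref(τ)·π^τ(a*)^k / Σ_{τ'} p_ref(τ')·π^{τ'}(a*)^k. Then for every a ∈ 𝒜, π_LLM(a | h_k) → π^{τ*}(a) as k → ∞. -/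
open Finset Filter

/-!
Dividing numerator and denominator of the posterior by the joint weight of `τ*` and the history
expresses it through the likelihood ratios against `τ*`. On the history `a*, …, a*` of length `k`
these are the powers `(π^τ(a*) / π^{τ*}(a*)) ^ k`, which vanish in the limit for `τ ≠ τ*`, so the
posterior converges to the point mass at `τ*`.
-/

section Ratios

open scoped Topology

theorem tendsto_div_sum_pi_single {ι T 𝕜 : Type*} [Fintype T] [DecidableEq T] [DivisionRing 𝕜]
    [TopologicalSpace 𝕜] [ContinuousAdd 𝕜] [ContinuousMul 𝕜] [ContinuousInv₀ 𝕜]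
    {l : Filter ι} {w : ι → T → 𝕜} {s : T} (hne : ∀ᶠ i in l, w i s ≠ 0)
    (hratio : ∀ t ≠ s, Tendsto (fun i => w i t / w i s) l (𝓝 0)) (t : T) :
    Tendsto (fun i => w i t / ∑ u, w i u) l (𝓝 ((Pi.single s 1 : T → 𝕜) t)) := by
  have hlim (u : T) : Tendsto (fun i => w i u / w i s) l (𝓝 ((Pi.single s 1 : T → 𝕜) u)) := by
    obtain rfl | hu := eq_or_ne u s
    · rw [Pi.single_eq_same]
      exact tendsto_const_nhds.congr' (hne.mono fun i hi => (div_self hi).symm)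
    · rw [Pi.single_eq_of_ne hu]
      exact hratio u hu
  have hsum : Tendsto (fun i => ∑ u, w i u / w i s) l (𝓝 1) := by
    simpa only [Fintype.sum_pi_single'] using tendsto_finsetSum univ fun u _ => hlim u
  have hquot := (hlim t).div hsum one_ne_zero
  rw [div_one] at hquot
  refine hquot.congr' (hne.mono fun i hi => ?_)
  rw [Pi.div_apply, ← sum_div, div_div_div_cancel_right₀ hi]

theorem tendsto_prod_map_replicate_div_nhds_zero {α 𝕜 : Type*} [NormedField 𝕜] {p q : α → 𝕜}
    {a : α} (hlt : ‖p a‖ < ‖q a‖) :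
    Tendsto (fun k => ((List.replicate k a).map p).prod / ((List.replicate k a).map q).prod)
      atTop (𝓝 0) := by
  have hratio : ‖p a / q a‖ < 1 := by
    rw [norm_div]
    exact (div_lt_one ((norm_nonneg _).trans_lt hlt)).2 hlt
  simpa only [List.map_replicate, List.prod_replicate, div_pow] using
    tendsto_pow_atTop_nhds_zero_of_norm_lt_one hratio

end Ratios

section Posterior

open scoped Topology

variable {ι T A : Type*} [Fintype T] {pref : T → ℝ} {pit : T → A → ℝ} {l : Filter ι}
  {h : ι → List A} {τs : T}

theorem tendsto_postW_pi_single [DecidableEq T] (hpref : pref τs ≠ 0)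
    (hne : ∀ᶠ i in l, ((h i).map (pit τs)).prod ≠ 0)
    (hratio : ∀ τ ≠ τs,
      Tendsto (fun i => ((h i).map (pit τ)).prod / ((h i).map (pit τs)).prod) l (𝓝 0)) :
    Tendsto (fun i => postW pref pit (h i)) l (𝓝 (Pi.single τs 1)) := by
  refine tendsto_pi_nhds.2 <| tendsto_div_sum_pi_single
    (hne.mono fun i hi => mul_ne_zero hpref hi) fun τ hτ => ?_
  simpa only [mul_div_mul_comm, mul_zero] using (hratio τ hτ).const_mul (pref τ / pref τs)

theorem tendsto_piLLM_of_tendsto_postW [DecidableEq T]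
    (hpost : Tendsto (fun i => postW pref pit (h i)) l (𝓝 (Pi.single τs 1))) (a : A) :
    Tendsto (fun i => piLLM pref pit (h i) a) l (𝓝 (pit τs a)) := by
  have hsum := tendsto_finsetSum univ fun τ _ =>
    (tendsto_pi_nhds.1 hpost τ).const_mul (pit τ a)
  simpa only [piLLM, Pi.single_apply, mul_ite, mul_one, mul_zero, Fintype.sum_ite_eq']
    using hsum

theorem stmt17_general (hpref : pref τs ≠ 0) {astar : A} (hne : pit τs astar ≠ 0)
    (huniq : ∀ τ ≠ τs, |pit τ astar| < |pit τs astar|) (a : A) :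
    Tendsto (fun k => piLLM pref pit (List.replicate k astar) a) atTop (𝓝 (pit τs a)) := by
  classical
  have hlik (k : ℕ) : ((List.replicate k astar).map (pit τs)).prod ≠ 0 := by
    rw [List.map_replicate, List.prod_replicate]
    exact pow_ne_zero k hne
  exact tendsto_piLLM_of_tendsto_postW
    (tendsto_postW_pi_single hpref (.of_forall hlik)
      fun τ hτ => tendsto_prod_map_replicate_div_nhds_zero (huniq τ hτ)) a

end Posterior

/-- in-context convergence to the best reference policy.  If `τ*` is
the unique maximizer of `π^τ(a*)` (with `π^{τ*}(a*) > 0`, `p_ref(τ*) > 0`), then for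
the history `h_k` consisting of `a*` repeated `k` times, `π_LLM(a|h_k) → π^{τ*}(a)`
as `k → ∞`, for every `a`. -/
theorem stmt17 {A : Type*} [Fintype A] {T : Type*} [Fintype T]
    (pref : T → ℝ) (hpref0 : ∀ τ, 0 < pref τ) (hpref1 : ∑ τ, pref τ = 1)
    (pit : T → A → ℝ) (hpit : ∀ τ, IsPolicy (pit τ))
    (astar : A) (τs : T)
    (huniq : ∀ τ, τ ≠ τs → pit τ astar < pit τs astar)
    (hpos : 0 < pit τs astar) :
    ∀ a, Tendsto (fun k : ℕ => piLLM pref pit (List.replicate k astar) a)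
      atTop (nhds (pit τs a)) := by
  exact stmt17_general (hpref0 τs).ne' hpos.ne' fun τ hτ => by
    simpa only [abs_of_nonneg ((hpit _).1 astar)] using huniq τ hτ
end
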